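/- arXiv:2405.01848 — 5 statements merged into one kernel-verified Lean document; each statement's English description precedes it below -/
import Mathlib

section
/- Let n ≥ 1, let rel : Fin n → ℝ, let σ be a permutation of Fin n, let g : ℝ → ℝ be monotone nondecreasing, and let h : Fin n → ℝ be antitone (h(p) ≥ h(q) whenever p ≤ q). If p < q are rank positions with rel(σ(q)) ≥ rel(σ(p)) (the document at the worse position q is at least as relevant as the document at the better position p), then GREM(rel, σ ∘ swap(p,q)) ≥ GREM(rel, σ), where swap(p,q) is the transposition of p and q. (Position Sensitivity of GREM-form metrics.) -/
/-- Generalized Ranking Effectiveness Metric: for relevance scores `rel`,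
ranking permutation `σ` (σ k is the document at rank position k),
gain `g` and discount `h`, `GREM = ∑ k, g (rel (σ k)) * h k`. -/
noncomputable def GREM {n : ℕ} (rel : Fin n → ℝ) (σ : Equiv.Perm (Fin n))
    (g : ℝ → ℝ) (h : Fin n → ℝ) : ℝ :=
  ∑ k, g (rel (σ k)) * h k

theorem sum_comp_swap_mul_sub_sum_mul {ι R : Type*} [Fintype ι] [DecidableEq ι]
    [NonUnitalNonAssocRing R] (f h : ι → R) (i j : ι) :
    ∑ k, f (Equiv.swap i j k) * h k - ∑ k, f k * h k = (f j - f i) * (h i - h j) := by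
  obtain rfl | hij := eq_or_ne i j
  · simp
  have fixed_terms_cancel (k : ι) (hk : k ≠ i ∧ k ≠ j) :
      f (Equiv.swap i j k) * h k - f k * h k = 0 := by
    rw [Equiv.swap_apply_of_ne_of_ne hk.1 hk.2, sub_self]
  calc
    ∑ k, f (Equiv.swap i j k) * h k - ∑ k, f k * h k
        = ∑ k, (f (Equiv.swap i j k) * h k - f k * h k) := (Finset.sum_sub_distrib ..).symm
    _ = (f j * h i - f i * h i) + (f i * h j - f j * h j) := by
      rw [Fintype.sum_eq_add i j hij fixed_terms_cancel, Equiv.swap_apply_left,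
        Equiv.swap_apply_right]
    _ = (f j - f i) * (h i - h j) := by
      rw [mul_sub, sub_mul, sub_mul]
      abel

theorem grem_mul_swap_sub_grem {n : ℕ} (rel : Fin n → ℝ) (σ : Equiv.Perm (Fin n))
    (g : ℝ → ℝ) (h : Fin n → ℝ) (p q : Fin n) :
    GREM rel (σ * Equiv.swap p q) g h - GREM rel σ g h =
      (g (rel (σ q)) - g (rel (σ p))) * (h p - h q) :=
  sum_comp_swap_mul_sub_sum_mul (fun k => g (rel (σ k))) h p q

theorem grem_position_sensitivity_general {n : ℕ} (rel : Fin n → ℝ) (σ : Equiv.Perm (Fin n))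
    (g : ℝ → ℝ) (h : Fin n → ℝ) {p q : Fin n} (hgain : g (rel (σ p)) ≤ g (rel (σ q)))
    (hdiscount : h q ≤ h p) :
    GREM rel σ g h ≤ GREM rel (σ * Equiv.swap p q) g h := by
  rw [← sub_nonneg, grem_mul_swap_sub_grem]
  exact mul_nonneg (sub_nonneg.2 hgain) (sub_nonneg.2 hdiscount)

/-- Position Sensitivity of GREM-form metrics: swapping positions `p < q` so
that the at-least-as-relevant document at the worse position `q` moves to the
better position `p` does not decrease the metric. -/
theorem grem_position_sensitivity (n : ℕ) (hn : 1 ≤ n)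
    (rel : Fin n → ℝ) (σ : Equiv.Perm (Fin n))
    (g : ℝ → ℝ) (hg : Monotone g) (h : Fin n → ℝ) (hh : Antitone h)
    (p q : Fin n) (hpq : p < q) (hrel : rel (σ p) ≤ rel (σ q)) :
    GREM rel σ g h ≤ GREM rel (σ * Equiv.swap p q) g h :=
  grem_position_sensitivity_general rel σ g h (hg hrel) (hh hpq.le)
end

section
/- Let n ≥ 1 and let φ : (Fin n → ℝ) → ℝ be twice continuously differentiable. Suppose that for all indices i ≠ j and all x : Fin n → ℝ, the second derivative of φ at x evaluated in the coordinate directions e_i and e_j vanishes, i.e. the derivative in direction e_j of the function x ↦ (fderiv φ x)(e_i) is identically zero, where e_i is the function that is 1 at coordinate i and 0 elsewhere. Then φ is additively separable: there exist functions f_j : ℝ → ℝ for each j : Fin n such that φ(x) = ∑_{j} f_j(x(j)) for all x. -/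
/-!
If `∂ᵤφ` has zero derivative along `v`, then `∂ᵤφ` is invariant under translation by `v`; hence
`Δ_[v] φ` has zero derivative along `u`, and the second difference `Δ_[u] (Δ_[v] φ)` vanishes.
Applied to directions in distinct coordinate axes, this makes each increment `Δ_[single i (x i)] φ`
invariant under moves along the other axes. Building `x` up from `0` one coordinate at a time
therefore telescopes to `φ x - φ 0 = ∑ i, (φ (single i (x i)) - φ 0)`.
-/

open scoped fwdDiff

section ForwardDifferences

variable {M G : Type*} [AddCommMonoid M] [AddCommGroup G]

lemma fwdDiff_zero_left (f : M → G) : Δ_[(0 : M)] f = 0 := by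
  ext x
  simp [fwdDiff]

lemma fwdDiff_add_left (u v : M) (f : M → G) (x : M) :
    Δ_[u + v] f x = Δ_[u] f (x + v) + Δ_[v] f x := by
  simp [fwdDiff, add_assoc, add_comm v u]

lemma fwdDiff_eq_zero_iff {v : M} {f : M → G} : Δ_[v] f = 0 ↔ ∀ x, f (x + v) = f x := by
  simp [funext_iff, fwdDiff, sub_eq_zero]

lemma fwdDiff_comm (u v : M) (f : M → G) : Δ_[u] (Δ_[v] f) = Δ_[v] (Δ_[u] f) := by
  ext x
  simp only [fwdDiff, add_right_comm x u v]
  abel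

variable {ι : Type*}

lemma fwdDiff_sum_left_eq_zero {s : Finset ι} {v : ι → M} {f : M → G}
    (h : ∀ i ∈ s, Δ_[v i] f = 0) : Δ_[∑ i ∈ s, v i] f = 0 := by
  refine Finset.sum_induction v (fun w ↦ Δ_[w] f = 0) (fun u w hu hw ↦ ?_)
    (fwdDiff_zero_left f) h
  ext x
  simp [fwdDiff_add_left, hu, hw]

lemma fwdDiff_sum_left_of_pairwise {s : Finset ι} {v : ι → M} {f : M → G}
    (h : (s : Set ι).Pairwise fun i j ↦ Δ_[v j] (Δ_[v i] f) = 0) :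
    Δ_[∑ i ∈ s, v i] f = ∑ i ∈ s, Δ_[v i] f := by
  induction s using Finset.cons_induction with
  | empty => simpa using fwdDiff_zero_left f
  | cons a s ha ih =>
    have hs := ih (h.mono (by simp))
    have hinvariant : Δ_[∑ i ∈ s, v i] (Δ_[v a] f) = 0 :=
      fwdDiff_sum_left_eq_zero fun i hi ↦
        h (by simp) (by simp [hi]) (ne_of_mem_of_not_mem hi ha).symm
    ext x
    rw [Finset.sum_cons, Finset.sum_cons, fwdDiff_add_left,
      fwdDiff_eq_zero_iff.mp hinvariant x, hs, Pi.add_apply]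

lemma exists_eq_sum_of_fwdDiff_fwdDiff_single_eq_zero [Fintype ι] [DecidableEq ι] [Nonempty ι]
    {E : ι → Type*} [∀ i, AddCommMonoid (E i)] {φ : (∀ i, E i) → G}
    (h : ∀ i j, i ≠ j → ∀ (u : E i) (v : E j), Δ_[Pi.single j v] (Δ_[Pi.single i u] φ) = 0) :
    ∃ f : ∀ i, E i → G, ∀ x, φ x = ∑ i, f i (x i) := by
  obtain ⟨i₀⟩ := ‹Nonempty ι›
  -- The constant `φ 0` is charged to one chosen coordinate, so no division in `G` is required.
  refine ⟨fun i t ↦ (φ (Pi.single i t) - φ 0) + (Pi.single i₀ (φ 0) : ι → G) i, fun x ↦ ?_⟩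
  have htelescope : φ x - φ 0 = ∑ i, (φ (Pi.single i (x i)) - φ 0) := by
    simpa [fwdDiff, Finset.univ_sum_single] using
      congrFun (fwdDiff_sum_left_of_pairwise (s := Finset.univ) (v := fun i ↦ Pi.single i (x i))
        fun i _ j _ hij ↦ h i j hij (x i) (x j)) 0
  rw [Finset.sum_add_distrib, ← htelescope, Fintype.sum_pi_single', sub_add_cancel]

end ForwardDifferences

section LineDerivatives

variable {𝕜 V F : Type*} [NontriviallyNormedField 𝕜] [AddCommGroup V] [Module 𝕜 V]
  [NormedAddCommGroup F] [NormedSpace 𝕜 F]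

lemma hasDerivAt_comp_line {f f' : V → F} {v : V} (hf : ∀ x, HasLineDerivAt 𝕜 f (f' x) x v)
    (x : V) (t : 𝕜) : HasDerivAt (fun s : 𝕜 ↦ f (x + s • v)) (f' (x + t • v)) t := by
  have h : HasDerivAt (fun s : 𝕜 ↦ f (x + t • v + s • v)) (f' (x + t • v)) (t - t) := by
    simpa [HasLineDerivAt] using hf (x + t • v)
  simpa [add_assoc, ← add_smul] using h.comp_sub_const t t

lemma hasLineDerivAt_fwdDiff {f f' : V → F} {u : V} (hf : ∀ x, HasLineDerivAt 𝕜 f (f' x) x u)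
    (v x : V) : HasLineDerivAt 𝕜 (Δ_[v] f) (Δ_[v] f' x) x u := by
  have hshift : HasDerivAt (fun t : 𝕜 ↦ f (x + t • u + v)) (f' (x + v)) 0 := by
    simpa only [HasLineDerivAt, add_right_comm] using hf (x + v)
  exact hshift.sub (hf x)

end LineDerivatives

section MeanValue

variable {𝕜 V F : Type*} [RCLike 𝕜] [AddCommGroup V] [Module 𝕜 V]
  [NormedAddCommGroup F] [NormedSpace 𝕜 F]

lemma fwdDiff_eq_zero_of_hasLineDerivAt_zero {f : V → F} {v : V}
    (hf : ∀ x, HasLineDerivAt 𝕜 f 0 x v) : Δ_[v] f = 0 := by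
  refine fwdDiff_eq_zero_iff.mpr fun x ↦ ?_
  have hline := hasDerivAt_comp_line (f' := 0) hf x
  simpa using is_const_of_deriv_eq_zero (fun t ↦ (hline t).differentiableAt)
    (fun t ↦ (hline t).deriv) 1 0

lemma fwdDiff_fwdDiff_eq_zero_of_hasLineDerivAt {f f' : V → F} {u v : V}
    (hf : ∀ x, HasLineDerivAt 𝕜 f (f' x) x u) (hf' : ∀ x, HasLineDerivAt 𝕜 f' 0 x v) :
    Δ_[v] (Δ_[u] f) = 0 := by
  rw [fwdDiff_comm]
  refine fwdDiff_eq_zero_of_hasLineDerivAt_zero (𝕜 := 𝕜) fun x ↦ ?_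
  simpa [fwdDiff_eq_zero_of_hasLineDerivAt_zero hf'] using hasLineDerivAt_fwdDiff hf v x

end MeanValue

lemma hasLineDerivAt_fderiv_apply_smul {𝕜 V F : Type*} [NontriviallyNormedField 𝕜]
    [NormedAddCommGroup V] [NormedSpace 𝕜 V] [NormedAddCommGroup F] [NormedSpace 𝕜 F]
    {φ : V → F} (hφ : ContDiff 𝕜 2 φ) (a b : 𝕜) (u v x : V) :
    HasLineDerivAt 𝕜 (fun y ↦ fderiv 𝕜 φ y (a • u))
      (b • a • fderiv 𝕜 (fun y ↦ fderiv 𝕜 φ y u) x v) x (b • v) := by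
  have hdiff : Differentiable 𝕜 fun y ↦ fderiv 𝕜 φ y u :=
    ((hφ.fderiv_right (m := 1) (by norm_num)).differentiable one_ne_zero).clm_apply
      (differentiable_const u)
  simpa using ((hdiff x).hasFDerivAt.fun_const_smul a).hasLineDerivAt (b • v)

theorem additively_separable_of_mixed_partials_zero_general {𝕜 ι F : Type*} [RCLike 𝕜]
    [Fintype ι] [DecidableEq ι] [Nonempty ι] {E : ι → Type*} [∀ i, AddCommGroup (E i)]
    [∀ i, Module 𝕜 (E i)] [NormedAddCommGroup F] [NormedSpace 𝕜 F]
    (φ : (∀ i, E i) → F) (φ' : ∀ i, E i → (∀ i, E i) → F)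
    (hφ : ∀ i u x, HasLineDerivAt 𝕜 φ (φ' i u x) x (Pi.single i u))
    (hmix : ∀ i j, i ≠ j → ∀ u v x, HasLineDerivAt 𝕜 (φ' i u) 0 x (Pi.single j v)) :
    ∃ f : ∀ i, E i → F, ∀ x, φ x = ∑ j, f j (x j) :=
  exists_eq_sum_of_fwdDiff_fwdDiff_single_eq_zero fun i j hij u v ↦
    fwdDiff_fwdDiff_eq_zero_of_hasLineDerivAt (hφ i u) (hmix i j hij u v)

/-- Additive separability from vanishing mixed second partial derivatives:
if a `C²` function `φ` of `n` real variables has all mixed second partials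
(in distinct coordinate directions) identically zero, then it can be written
as a sum of single-variable functions. -/
theorem additively_separable_of_mixed_partials_zero (n : ℕ) (hn : 1 ≤ n)
    (φ : (Fin n → ℝ) → ℝ) (hφ : ContDiff ℝ 2 φ)
    (hmix : ∀ i j : Fin n, i ≠ j → ∀ x : Fin n → ℝ,
      fderiv ℝ (fun y => fderiv ℝ φ y (Pi.single i (1 : ℝ))) x (Pi.single j (1 : ℝ)) = 0) :
    ∃ f : Fin n → ℝ → ℝ, ∀ x : Fin n → ℝ, φ x = ∑ j, f j (x j) := by
  have : Nonempty (Fin n) := ⟨⟨0, hn⟩⟩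
  refine additively_separable_of_mixed_partials_zero_general φ
    (fun i u y ↦ fderiv ℝ φ y (Pi.single i u))
    (fun i u x ↦ (hφ.differentiable two_ne_zero x).hasFDerivAt.hasLineDerivAt _)
    fun i j hij u v x ↦ ?_
  simpa [hmix i j hij x, ← Pi.single_smul] using
    hasLineDerivAt_fderiv_apply_smul hφ u v (Pi.single i 1) (Pi.single j 1) x
end

section
/- Let n ≥ 1 and let φ : (Fin n → ℝ) → ℝ be of the additively separable form φ(x) = ∑_{j} f_j(x(j)) for functions f_j : ℝ → ℝ. Suppose φ satisfies Position Sensitivity: for all x : Fin n → ℝ and all indices p < q with x(p) ≤ x(q), one has φ(x ∘ swap(p,q)) ≥ φ(x), where swap(p,q) is the transposition of p and q. Then for all indices i < j, the function f_i − f_j is monotone nondecreasing, i.e. for all real a ≥ b, f_i(a) + f_j(b) ≥ f_i(b) + f_j(a). -/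
/-!
Swapping the entries of `x` at `i` and `j` only affects the terms `i` and `j` of `∑ k, f k (x k)`.
Hence Position Sensitivity at `i < j` is a condition on `f i` and `f j` alone, and a vector with
`x i = b` and `x j = a` reads it off as the claimed inequality.
-/

section

variable {ι α M : Type*} [DecidableEq ι]

/-- Position Sensitivity of a metric `φ` on score vectors: moving the larger of two scores to the
better position does not decrease `φ`. Positions are ordered with the best one first. -/
def PositionSensitive [Preorder ι] [Preorder α] [LE M] (φ : (ι → α) → M) : Prop :=
  ∀ (x : ι → α) (p q : ι), p < q → x p ≤ x q → φ x ≤ φ (x ∘ Equiv.swap p q)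

variable [Fintype ι] [AddCommMonoid M]

theorem sum_eq_add_add_sum_compl_pair (g : ι → M) {i j : ι} (hij : i ≠ j) :
    ∑ k, g k = g i + g j + ∑ k ∈ {i, j}ᶜ, g k := by
  rw [← Finset.sum_add_sum_compl {i, j} g, Finset.sum_pair hij]

theorem sum_comp_swap_eq (f : ι → α → M) (x : ι → α) {i j : ι} (hij : i ≠ j) :
    ∑ k, f k ((x ∘ Equiv.swap i j) k) =
      f i (x j) + f j (x i) + ∑ k ∈ {i, j}ᶜ, f k (x k) := by
  have off_pair : ∑ k ∈ {i, j}ᶜ, f k ((x ∘ Equiv.swap i j) k) = ∑ k ∈ {i, j}ᶜ, f k (x k) := by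
    refine Finset.sum_congr rfl fun k hk ↦ ?_
    obtain ⟨hki, hkj⟩ : k ≠ i ∧ k ≠ j := by simpa using hk
    rw [Function.comp_apply, Equiv.swap_apply_of_ne_of_ne hki hkj]
  rw [sum_eq_add_add_sum_compl_pair _ hij, off_pair]
  simp only [Function.comp_apply, Equiv.swap_apply_left, Equiv.swap_apply_right]

variable [Preorder M] [IsOrderedCancelAddMonoid M]

theorem sum_le_sum_comp_swap_iff (f : ι → α → M) (x : ι → α) {i j : ι} (hij : i ≠ j) :
    ∑ k, f k (x k) ≤ ∑ k, f k ((x ∘ Equiv.swap i j) k) ↔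
      f i (x i) + f j (x j) ≤ f i (x j) + f j (x i) := by
  rw [sum_comp_swap_eq f x hij, sum_eq_add_add_sum_compl_pair _ hij, add_le_add_iff_right]

theorem position_sensitivity_implies_ordered_components_general [Preorder ι] [Preorder α]
    (f : ι → α → M) (φ : (ι → α) → M) (hφ : ∀ x, φ x = ∑ k, f k (x k)) :
    PositionSensitive φ ↔
      ∀ i j : ι, i < j → ∀ a b : α, b ≤ a → f i b + f j a ≤ f i a + f j b := by
  have swap_iff (x : ι → α) {i j : ι} (hij : i < j) :
      φ x ≤ φ (x ∘ Equiv.swap i j) ↔ f i (x i) + f j (x j) ≤ f i (x j) + f j (x i) := by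
    rw [hφ, hφ, sum_le_sum_comp_swap_iff f x hij.ne]
  constructor
  · intro hPS i j hij a b hab
    let x : ι → α := Function.update (fun _ ↦ b) j a
    have hxi : x i = b := Function.update_of_ne hij.ne a (fun _ ↦ b)
    have hxj : x j = a := Function.update_self j a (fun _ ↦ b)
    have hx : x i ≤ x j := by rwa [hxi, hxj]
    simpa only [hxi, hxj] using (swap_iff x hij).mp (hPS x i j hij hx)
  · intro hf x p q hpq hx
    exact (swap_iff x hpq).mpr (hf p q hpq (x q) (x p) hx)

end

/-- For an additively separable metric `φ x = ∑ j, f j (x j)` satisfying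
Position Sensitivity, the differences `f i − f j` (for `i < j`) are monotone
nondecreasing: for `a ≥ b`, `f i a + f j b ≥ f i b + f j a`. -/
theorem position_sensitivity_implies_ordered_components (n : ℕ) (hn : 1 ≤ n)
    (f : Fin n → ℝ → ℝ) (φ : (Fin n → ℝ) → ℝ)
    (hφ : ∀ x : Fin n → ℝ, φ x = ∑ j, f j (x j))
    (hPS : ∀ (x : Fin n → ℝ) (p q : Fin n), p < q → x p ≤ x q →
      φ x ≤ φ (x ∘ Equiv.swap p q)) :
    ∀ i j : Fin n, i < j → ∀ a b : ℝ, b ≤ a →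
      f i b + f j a ≤ f i a + f j b :=
  (position_sensitivity_implies_ordered_components_general f φ hφ).mp hPS
end

section
/- Let m ≥ 1, let v : Finset (Fin m) → ℝ be a characteristic function, and let i, j : Fin m be distinct players. If for every subset S ⊆ univ \ {i, j} one has v(S ∪ {i}) = v(S ∪ {j}), then φ_i(v) = φ_j(v). (Symmetry axiom for the Shapley value.) -/
/-- The Shapley value of player `i` in the game with characteristic function
`v` on the player set `Fin m`:
`φ_i(v) = ∑_{S ⊆ univ \ {i}} (|S|! (m−|S|−1)! / m!) (v(S ∪ {i}) − v(S))`. -/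
noncomputable def shapley {m : ℕ} (v : Finset (Fin m) → ℝ) (i : Fin m) : ℝ :=
  ∑ S ∈ (Finset.univ.erase i).powerset,
    ((S.card.factorial * (m - S.card - 1).factorial : ℝ) / (m.factorial : ℝ))
      * (v (insert i S) - v S)

/-!
The Shapley value does not depend on the names of the players: relabelling a game by a permutation
relabels its Shapley values in the same way. When two players contribute equally to every coalition
excluding both, transposing them leaves the game unchanged, so their values agree.
-/

section Swap

open Equiv

variable {α : Type*} [DecidableEq α] {i j : α}

theorem map_swap_eq_self {S : Finset α} (h : i ∈ S ↔ j ∈ S) :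
    S.map (swap i j).toEmbedding = S := by
  rw [← Finset.coe_inj, Finset.coe_map]
  exact (swap_bijOn_self h).image_eq

theorem map_swap_insert {T : Finset α} (hi : i ∉ T) (hj : j ∉ T) :
    (insert i T).map (swap i j).toEmbedding = insert j T := by
  rw [Finset.map_insert, map_swap_eq_self (iff_of_false hi hj), coe_toEmbedding, swap_apply_left]

theorem apply_map_swap_of_apply_insert_eq {β : Type*} {v : Finset α → β}
    (h : ∀ T, i ∉ T → j ∉ T → v (insert i T) = v (insert j T)) (S : Finset α) :
    v (S.map (swap i j).toEmbedding) = v S := by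
  by_cases hS : i ∈ S ↔ j ∈ S
  · rw [map_swap_eq_self hS]
  wlog hi : i ∈ S generalizing i j
  · rw [swap_comm]
    exact this (fun T hj hi => (h T hi hj).symm) (fun hji => hS hji.symm) (by tauto)
  have hj : j ∉ S := fun hj => hS (iff_of_true hi hj)
  obtain ⟨T, hiT, rfl⟩ : ∃ T, i ∉ T ∧ insert i T = S :=
    ⟨S.erase i, S.notMem_erase i, Finset.insert_erase hi⟩
  have hjT : j ∉ T := fun hjT => hj (Finset.mem_insert_of_mem hjT)
  rw [map_swap_insert hiT hjT, h T hiT hjT]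

end Swap

theorem shapley_map_perm {m : ℕ} (v : Finset (Fin m) → ℝ) (σ : Equiv.Perm (Fin m)) (i : Fin m) :
    shapley (fun S => v (S.map σ.toEmbedding)) i = shapley v (σ i) := by
  refine Finset.sum_equiv σ.finsetCongr (fun S => ?_) fun S _ => ?_
  · simp [Finset.subset_erase]
  · simp only [Equiv.finsetCongr_apply, Finset.card_map, Finset.map_insert, Equiv.coe_toEmbedding]

/-- Symmetry axiom: two players that contribute equally to every coalition
excluding both of them receive equal Shapley values. -/
theorem shapley_symmetry (m : ℕ) (hm : 1 ≤ m) (v : Finset (Fin m) → ℝ)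
    (i j : Fin m) (hij : i ≠ j)
    (hsym : ∀ S ⊆ (Finset.univ.erase i).erase j, v (insert i S) = v (insert j S)) :
    shapley v i = shapley v j := by
  have swap_invariant (S : Finset (Fin m)) : v (S.map (Equiv.swap i j).toEmbedding) = v S :=
    apply_map_swap_of_apply_insert_eq
      (fun T hi hj => hsym T (by simp [Finset.subset_erase, hi, hj])) S
  calc shapley v i
    _ = shapley (fun S => v (S.map (Equiv.swap i j).toEmbedding)) i := by simp only [swap_invariant]
    _ = shapley v (Equiv.swap i j i) := shapley_map_perm v _ i
    _ = shapley v j := by rw [Equiv.swap_apply_left]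
end

section
/- Let m ≥ 1 and let ψ be a map assigning to every characteristic function v : Finset (Fin m) → ℝ an attribution vector ψ(v) : Fin m → ℝ. Suppose ψ satisfies: (i) Efficiency: ∑_{i} ψ(v)(i) = v(univ) − v(∅) for all v; (ii) Symmetry: if i ≠ j and v(S ∪ {i}) = v(S ∪ {j}) for all S ⊆ univ \ {i, j}, then ψ(v)(i) = ψ(v)(j); and (iii) Strong Monotonicity: if v(S ∪ {i}) − v(S) ≥ w(S ∪ {i}) − w(S) for all S ⊆ univ \ {i}, then ψ(v)(i) ≥ ψ(w)(i). Then ψ is the Shapley value: for every v and every i, ψ(v)(i) = φ_i(v) = ∑_{S ⊆ univ \ {i}} (|S|! · (m − |S| − 1)! / m!) · (v(S ∪ {i}) − v(S)). (Uniqueness of the Shapley value; this is the theorem underlying the paper's Theorem 2 on RankSHAP.) -/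
/-!
Subtracting from `v` the game `S ↦ v (S \ {i})` leaves the marginal contributions of `i` unchanged
and makes `i` a veto player, while every veto player of `v` stays one. By induction on the number of
players without veto, two symmetric solutions that depend only on marginal contributions and
distribute the same total agree on those players; the veto players are interchangeable, so equality
of the totals forces agreement on them too. It remains to see that the Shapley value is such a
solution: in `∑ i, φ_i(v)` each `v T` occurs with coefficient
`([T ≠ ∅] - [T ≠ univ]) / n.choose #T`.
-/

namespace CooperativeGame

open Finset
open scoped Nat

variable {ι κ M K : Type*}

section Axioms

variable [Fintype ι] [DecidableEq ι]

/-- Players `i` and `j` contribute equally to every coalition containing neither of them. -/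
def Interchangeable (v : Finset ι → M) (i j : ι) : Prop :=
  ∀ S ⊆ (univ.erase i).erase j, v (insert i S) = v (insert j S)

theorem Interchangeable.map_swap {v : Finset ι → M} {i j : ι} (h : Interchangeable v i j)
    (S : Finset ι) : v (S.map (Equiv.swap i j).toEmbedding) = v S := by
  have mem_map_swap (x : ι) :
      x ∈ S.map (Equiv.swap i j).toEmbedding ↔ Equiv.swap i j x ∈ S := by
    simp
  have hv := h ((S.erase i).erase j) (by grind)
  by_cases hi : i ∈ S <;> by_cases hj : j ∈ S
  · congr 1; grind
  · convert hv.symm using 2 <;> grind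
  · convert hv using 2 <;> grind
  · congr 1; grind

/-- The symmetry axiom: interchangeable players receive the same value. -/
def IsSymmetric (ψ : (Finset ι → M) → ι → M) : Prop :=
  ∀ (v : Finset ι → M) (i j : ι), i ≠ j → Interchangeable v i j → ψ v i = ψ v j

/-- The efficiency axiom, for games whose value at `∅` need not vanish. -/
def IsEfficient [AddCommGroup M] (ψ : (Finset ι → M) → ι → M) : Prop :=
  ∀ v : Finset ι → M, ∑ i, ψ v i = v univ - v ∅

/-- Young's marginality axiom: the value of a player depends only on the player's marginal
contributions. -/
def IsMarginal [AddCommGroup M] (ψ : (Finset ι → M) → ι → M) : Prop :=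
  ∀ (v w : Finset ι → M) (i : ι),
    (∀ S ⊆ univ.erase i, w (insert i S) - w S = v (insert i S) - v S) → ψ w i = ψ v i

/-- Young's strong monotonicity axiom: the value of a player is monotone in the player's marginal
contributions. -/
def IsStronglyMonotone [AddCommGroup M] [PartialOrder M] (ψ : (Finset ι → M) → ι → M) : Prop :=
  ∀ (v w : Finset ι → M) (i : ι),
    (∀ S ⊆ univ.erase i, w (insert i S) - w S ≤ v (insert i S) - v S) → ψ w i ≤ ψ v i

theorem IsStronglyMonotone.isMarginal [AddCommGroup M] [PartialOrder M]
    {ψ : (Finset ι → M) → ι → M} (hψ : IsStronglyMonotone ψ) : IsMarginal ψ :=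
  fun v w i h ↦ le_antisymm (hψ v w i fun S hS ↦ (h S hS).le) (hψ w v i fun S hS ↦ (h S hS).ge)

end Axioms

section Veto

/-- Every coalition without the veto player `i` is worth `0`. -/
def IsVeto [Zero M] (v : Finset ι → M) (i : ι) : Prop :=
  ∀ S, i ∉ S → v S = 0

theorem IsVeto.interchangeable [Fintype ι] [DecidableEq ι] [Zero M] {v : Finset ι → M} {i j : ι}
    (hi : IsVeto v i) (hj : IsVeto v j) (hij : i ≠ j) : Interchangeable v i j := by
  intro S hS
  obtain ⟨hiS, hjS⟩ : i ∉ S ∧ j ∉ S := by grind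
  rw [hj _ (by simp [hij.symm, hjS]), hi _ (by simp [hij, hiS])]

variable [DecidableEq ι] [AddCommGroup M]

/-- The game in which a coalition is worth what it would lose if `i` left. It has the marginal
contributions of `i` in `v`, and `i` is a veto player of it. -/
def vetoGame (v : Finset ι → M) (i : ι) (S : Finset ι) : M :=
  v S - v (S.erase i)

theorem vetoGame_insert_sub (v : Finset ι → M) {i : ι} {S : Finset ι} (hi : i ∉ S) :
    vetoGame v i (insert i S) - vetoGame v i S = v (insert i S) - v S := by
  simp [vetoGame, hi]

theorem isVeto_vetoGame_self (v : Finset ι → M) (i : ι) : IsVeto (vetoGame v i) i :=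
  fun S hi ↦ by simp [vetoGame, hi]

theorem IsVeto.vetoGame {v : Finset ι → M} {j : ι} (hj : IsVeto v j) (i : ι) :
    IsVeto (vetoGame v i) j := fun S hjS ↦ by
  rw [CooperativeGame.vetoGame, hj S hjS, hj _ (mt mem_of_mem_erase hjS), sub_zero]

open scoped Classical in
theorem card_not_isVeto_vetoGame_lt [Fintype ι] {v : Finset ι → M} {i : ι} (hi : ¬ IsVeto v i) :
    #{j | ¬ IsVeto (vetoGame v i) j} < #{j | ¬ IsVeto v j} := by
  refine card_lt_card ((ssubset_iff_of_subset ?_).mpr ⟨i, ?_, ?_⟩)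
  · exact monotone_filter_right _ fun j _ ↦ mt fun hj ↦ hj.vetoGame i
  · simpa using hi
  · simpa using isVeto_vetoGame_self v i

end Veto

section Uniqueness

variable [Fintype ι] [AddCommGroup M] [IsAddTorsionFree M]

theorem eq_zero_of_sum_eq_zero_of_const_on {d : ι → M} {p : ι → Prop} (hsum : ∑ i, d i = 0)
    (hconst : ∀ i j, p i → p j → d i = d j) (hzero : ∀ i, ¬ p i → d i = 0) (i : ι) : d i = 0 := by
  classical
  by_cases hi : p i
  · have hcard : #{j | p j} • d i = 0 := by
      rw [← hsum, ← sum_const, sum_filter]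
      refine sum_congr rfl fun j _ ↦ ?_
      split_ifs with hj
      exacts [hconst i j hi hj, (hzero j hj).symm]
    exact (smul_eq_zero.mp hcard).resolve_left (card_ne_zero_of_mem (mem_filter_univ i |>.mpr hi))
  · exact hzero i hi

theorem IsMarginal.eq_of_isSymmetric [DecidableEq ι] {ψ₁ ψ₂ : (Finset ι → M) → ι → M}
    (hψ₁ : IsMarginal ψ₁) (hψ₂ : IsMarginal ψ₂) (hψ₁s : IsSymmetric ψ₁) (hψ₂s : IsSymmetric ψ₂)
    (hsum : ∀ v, ∑ i, ψ₁ v i = ∑ i, ψ₂ v i) (v : Finset ι → M) : ψ₁ v = ψ₂ v := by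
  classical
  induction hn : #{j | ¬ IsVeto v j} using Nat.strong_induction_on generalizing v with
  | _ n ih =>
    subst hn
    have eq_of_not_isVeto (i : ι) (hi : ¬ IsVeto v i) : ψ₁ v i = ψ₂ v i := by
      have same_marginals : ∀ S ⊆ univ.erase i,
          v (insert i S) - v S = vetoGame v i (insert i S) - vetoGame v i S :=
        fun S hS ↦ (vetoGame_insert_sub v (subset_erase.mp hS).2).symm
      rw [hψ₁ _ _ i same_marginals, hψ₂ _ _ i same_marginals,
        ih _ (card_not_isVeto_vetoGame_lt hi) _ rfl]
    have const_on_veto (i j : ι) (hi : IsVeto v i) (hj : IsVeto v j) :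
        ψ₁ v i - ψ₂ v i = ψ₁ v j - ψ₂ v j := by
      obtain rfl | hij := eq_or_ne i j
      · rfl
      · rw [hψ₁s v i j hij (hi.interchangeable hj hij), hψ₂s v i j hij (hi.interchangeable hj hij)]
    have sum_sub_eq_zero : ∑ i, (ψ₁ v i - ψ₂ v i) = 0 := by
      rw [sum_sub_distrib, hsum, sub_self]
    funext i
    exact sub_eq_zero.mp <| eq_zero_of_sum_eq_zero_of_const_on sum_sub_eq_zero const_on_veto
      (fun j hj ↦ sub_eq_zero.mpr (eq_of_not_isVeto j hj)) i

end Uniqueness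

section DoubleCounting

variable [Fintype ι] [DecidableEq ι] [AddCommMonoid M]

theorem sum_powerset_erase_insert (f : Finset ι → M) (i : ι) :
    ∑ S ∈ (univ.erase i).powerset, f (insert i S) = ∑ T with i ∈ T, f T := by
  refine sum_bij' (fun S _ ↦ insert i S) (fun T _ ↦ T.erase i) ?_ ?_ ?_ ?_ ?_ <;>
    simp +contextual [subset_erase]

theorem sum_sum_powerset_erase_insert (f : Finset ι → M) :
    ∑ i, ∑ S ∈ (univ.erase i).powerset, f (insert i S) = ∑ T, #T • f T := by
  simp_rw [sum_powerset_erase_insert, ← sum_const]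
  exact sum_comm' (by simp)

theorem sum_sum_powerset_erase (f : Finset ι → M) :
    ∑ i, ∑ S ∈ (univ.erase i).powerset, f S = ∑ T, #Tᶜ • f T := by
  simp_rw [← sum_const]
  exact sum_comm' (by simp [subset_erase])

end DoubleCounting

section ShapleyValue

/-- The probability `k! (n - k - 1)! / n!` that a given player of `n` players arriving in random
order is preceded by exactly a given set of `k` other players. -/
def shapleyWeight (K : Type*) [Field K] (n k : ℕ) : K :=
  k ! * (n - k - 1)! / n !

/-- The Shapley value for an arbitrary finite player set and games with values in a field. -/
def shapleyValue [Fintype ι] [DecidableEq ι] [Field K] (v : Finset ι → K) (i : ι) : K :=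
  ∑ S ∈ (univ.erase i).powerset, shapleyWeight K (Fintype.card ι) #S * (v (insert i S) - v S)

theorem shapley_eq_shapleyValue {m : ℕ} (v : Finset (Fin m) → ℝ) (i : Fin m) :
    shapley v i = shapleyValue v i := by
  simp only [shapley, shapleyValue, shapleyWeight, Fintype.card_fin]

variable [Field K]

theorem sub_mul_shapleyWeight [CharZero K] {n k : ℕ} (hk : k < n) :
    ((n - k : ℕ) : K) * shapleyWeight K n k = (n.choose k : K)⁻¹ := by
  rw [shapleyWeight, Nat.cast_choose K hk.le, inv_div,
    ← Nat.mul_factorial_pred (Nat.sub_ne_zero_of_lt hk)]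
  push_cast
  ring

theorem mul_shapleyWeight_pred [CharZero K] {n k : ℕ} (hk : k ≠ 0) (hkn : k ≤ n) :
    (k : K) * shapleyWeight K n (k - 1) = (n.choose k : K)⁻¹ := by
  rw [shapleyWeight, Nat.cast_choose K hkn, inv_div, ← Nat.mul_factorial_pred hk,
    show n - (k - 1) - 1 = n - k by lia]
  push_cast
  ring

variable [Fintype ι]

theorem sum_card_mul_shapleyWeight_pred [CharZero K] (v : Finset ι → K) :
    ∑ T, #T • (shapleyWeight K (Fintype.card ι) (#T - 1) * v T) =
      ∑ T, ((Fintype.card ι).choose #T : K)⁻¹ * v T - v ∅ := by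
  classical
  calc ∑ T, #T • (shapleyWeight K (Fintype.card ι) (#T - 1) * v T)
      = ∑ T ∈ univ.erase ∅, #T • (shapleyWeight K (Fintype.card ι) (#T - 1) * v T) :=
        (sum_erase _ (by simp)).symm
    _ = ∑ T ∈ univ.erase ∅, ((Fintype.card ι).choose #T : K)⁻¹ * v T :=
        sum_congr rfl fun T hT ↦ by
          rw [nsmul_eq_mul, ← mul_assoc,
            mul_shapleyWeight_pred (card_eq_zero.not.mpr (ne_of_mem_erase hT)) (card_le_univ T)]
    _ = ∑ T, ((Fintype.card ι).choose #T : K)⁻¹ * v T - v ∅ := by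
        rw [sum_erase_eq_sub (mem_univ _)]
        simp

variable [DecidableEq ι]

theorem sum_card_compl_mul_shapleyWeight [CharZero K] (v : Finset ι → K) :
    ∑ T, #Tᶜ • (shapleyWeight K (Fintype.card ι) #T * v T) =
      ∑ T, ((Fintype.card ι).choose #T : K)⁻¹ * v T - v univ := by
  calc ∑ T, #Tᶜ • (shapleyWeight K (Fintype.card ι) #T * v T)
      = ∑ T ∈ univ.erase univ, #Tᶜ • (shapleyWeight K (Fintype.card ι) #T * v T) :=
        (sum_erase _ (by simp)).symm
    _ = ∑ T ∈ univ.erase univ, ((Fintype.card ι).choose #T : K)⁻¹ * v T :=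
        sum_congr rfl fun T hT ↦ by
          rw [nsmul_eq_mul, ← mul_assoc, card_compl,
            sub_mul_shapleyWeight ((card_lt_iff_ne_univ T).mpr (ne_of_mem_erase hT))]
    _ = ∑ T, ((Fintype.card ι).choose #T : K)⁻¹ * v T - v univ := by
        rw [sum_erase_eq_sub (mem_univ _)]
        simp

theorem isMarginal_shapleyValue : IsMarginal (shapleyValue : (Finset ι → K) → ι → K) :=
  fun _ _ _ h ↦ sum_congr rfl fun S hS ↦ by rw [h S (mem_powerset.mp hS)]

theorem shapleyValue_comp_map [Fintype κ] [DecidableEq κ] (e : ι ≃ κ) (v : Finset κ → K) (i : ι) :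
    shapleyValue (fun S ↦ v (S.map e.toEmbedding)) i = shapleyValue v (e i) := by
  refine sum_equiv e.finsetCongr (fun S ↦ ?_) fun S _ ↦ ?_
  · simp [subset_erase]
  · simp [map_insert, Fintype.card_congr e]

theorem isSymmetric_shapleyValue : IsSymmetric (shapleyValue : (Finset ι → K) → ι → K) := by
  intro v i j _ h
  calc shapleyValue v i
      = shapleyValue (fun S ↦ v (S.map (Equiv.swap i j).toEmbedding)) i := by
        simp_rw [h.map_swap]
    _ = shapleyValue v j := by rw [shapleyValue_comp_map, Equiv.swap_apply_left]

theorem sum_shapleyValue (v : Finset ι → K) :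
    ∑ i, shapleyValue v i =
      ∑ T, #T • (shapleyWeight K (Fintype.card ι) (#T - 1) * v T) -
        ∑ T, #Tᶜ • (shapleyWeight K (Fintype.card ι) #T * v T) := by
  rw [← sum_sum_powerset_erase_insert, ← sum_sum_powerset_erase, ← sum_sub_distrib]
  refine sum_congr rfl fun i _ ↦ ?_
  rw [← sum_sub_distrib]
  refine sum_congr rfl fun S hS ↦ ?_
  have hi : i ∉ S := (subset_erase.mp (mem_powerset.mp hS)).2
  rw [card_insert_of_notMem hi, Nat.add_sub_cancel, mul_sub]

theorem isEfficient_shapleyValue [CharZero K] :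
    IsEfficient (shapleyValue : (Finset ι → K) → ι → K) := fun v ↦ by
  rw [sum_shapleyValue, sum_card_mul_shapleyWeight_pred, sum_card_compl_mul_shapleyWeight,
    sub_sub_sub_cancel_left]

end ShapleyValue

end CooperativeGame

open CooperativeGame in
theorem shapley_uniqueness_general {ι K : Type*} [Fintype ι] [DecidableEq ι] [Field K] [CharZero K]
    {ψ : (Finset ι → K) → ι → K} (hEff : IsEfficient ψ) (hSym : IsSymmetric ψ)
    (hMarg : IsMarginal ψ) (v : Finset ι → K) (i : ι) : ψ v i = shapleyValue v i :=
  congrFun (hMarg.eq_of_isSymmetric isMarginal_shapleyValue hSym isSymmetric_shapleyValue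
    (fun w ↦ (hEff w).trans (isEfficient_shapleyValue w).symm) v) i

/-- Uniqueness of the Shapley value: any attribution map satisfying
Efficiency, Symmetry and Strong Monotonicity coincides with the Shapley
value. -/
theorem shapley_uniqueness (m : ℕ) (hm : 1 ≤ m)
    (ψ : (Finset (Fin m) → ℝ) → (Fin m → ℝ))
    (hEff : ∀ v : Finset (Fin m) → ℝ,
      ∑ i : Fin m, ψ v i = v Finset.univ - v ∅)
    (hSym : ∀ (v : Finset (Fin m) → ℝ) (i j : Fin m), i ≠ j →
      (∀ S ⊆ (Finset.univ.erase i).erase j, v (insert i S) = v (insert j S)) →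
      ψ v i = ψ v j)
    (hMono : ∀ (v w : Finset (Fin m) → ℝ) (i : Fin m),
      (∀ S ⊆ Finset.univ.erase i, w (insert i S) - w S ≤ v (insert i S) - v S) →
      ψ w i ≤ ψ v i) :
    ∀ (v : Finset (Fin m) → ℝ) (i : Fin m), ψ v i = shapley v i := fun v i ↦
  (shapley_uniqueness_general hEff hSym
    (CooperativeGame.IsStronglyMonotone.isMarginal hMono) v i).trans
    (CooperativeGame.shapley_eq_shapleyValue v i).symm
end
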